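/- (Example 3.1, non-convergence of gradient descent descent ascent (G2DA).) Consider the update map F(λ, x, y) = ( max(0, λ − 1 + x + y), proj_{[−1,1]}(−x + λ), proj_{[−1,1]}(y + 1 − λ) ), obtained by applying G2DA with all step sizes equal to 1 to the Lagrangian L(x, y, λ) = x² + y + λ(1 − (x + y)) of the game min_{x∈[−1,1]} max{ x² + y + 1 : y ∈ [−1,1], 1 − (x + y) ≥ 0 }. Then F(0,0,0) = (0,0,1) and F(0,0,1) = (0,0,1), so the iterates started at (0,0,0) equal (0,0,1) for all t ≥ 1; and the strategy pair (x, y) = (0, 1) is not a Stackelberg equilibrium of the game, whose unique optimum is (λ*, x*, y*) = (1, 1/2, 1/2). -/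

import Mathlib

/-- The G2DA update map for the game of Example 3.1, obtained by applying gradient
descent descent ascent with all step sizes equal to `1` to the Lagrangian
`L(x, y, λ) = x² + y + λ(1 - (x + y))`:
`F(λ, x, y) = (max 0 (λ - 1 + x + y), proj_{[-1,1]}(-x + λ), proj_{[-1,1]}(y + 1 - λ))`. -/
noncomputable def g2daUpdate : ℝ × ℝ × ℝ → ℝ × ℝ × ℝ :=
  fun p => (max 0 (p.1 - 1 + p.2.1 + p.2.2),
            max (-1) (min 1 (-p.2.1 + p.1)),
            max (-1) (min 1 (p.2.2 + 1 - p.1)))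

/-!
From `(0, 0, 0)` the update reaches its fixed point `(0, 0, 1)` in one step, while the game is
solved elsewhere.

The follower's best reply to `x` is `min 1 (1 - x)`, so the leader faces the value function
`x² + min 1 (1 - x) + 1`. It equals `7/4 + (x - 1/2)²` for `x ≥ 0` and is at least `2` for `x ≤ 0`,
so its only minimiser is `1/2`. By weak duality the maximum of the Lagrangian over `y` dominates
this value function, so an optimal pair `(λ, x)` must have `x = 1/2`. There the Lagrangian is
affine in `y`, with values `1/4 + 3λ/2` at `y = -1` and `9/4 - λ/2` at `y = 1`, and both are at most
`7/4` only for `λ = 1`.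
-/

theorem iterate_eq_of_apply_eq_of_isFixedPt {α : Type*} {f : α → α} {a b : α} (hab : f a = b)
    (hb : Function.IsFixedPt f b) {n : ℕ} (hn : n ≠ 0) : f^[n] a = b := by
  obtain ⟨m, rfl⟩ := Nat.exists_eq_succ_of_ne_zero hn
  rw [Function.iterate_succ_apply, hab, hb.iterate m]

theorem isGreatest_max_endpoints_of_convexOn {𝕜 E : Type*} [Field 𝕜] [LinearOrder 𝕜]
    [IsStrictOrderedRing 𝕜] [AddCommGroup E] [LinearOrder E] [IsOrderedAddMonoid E] [Module 𝕜 E]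
    [IsStrictOrderedModule 𝕜 E] {h : 𝕜 → E} {a b : 𝕜} (hab : a ≤ b)
    (hh : ConvexOn 𝕜 (Set.Icc a b) h) :
    IsGreatest {w | ∃ y ∈ Set.Icc a b, w = h y} (max (h a) (h b)) := by
  have ha : a ∈ Set.Icc a b := Set.left_mem_Icc.mpr hab
  have hb : b ∈ Set.Icc a b := Set.right_mem_Icc.mpr hab
  constructor
  · rcases max_choice (h a) (h b) with hmax | hmax
    · exact ⟨a, ha, hmax⟩
    · exact ⟨b, hb, hmax⟩
  · rintro _ ⟨y, hy, rfl⟩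
    exact hh.le_max_of_mem_Icc ha hb hy

/-- The data of the game `min_{x ∈ X} max {f(x, y) : y ∈ Y, g(x, y) ≥ 0}`: the leader chooses
`x ∈ X`, and the follower replies with some `y ∈ Y` subject to the coupled constraint. -/
structure StackelbergGame (α β : Type*) where
  X : Set α
  Y : Set β
  f : α → β → ℝ
  g : α → β → ℝ

namespace StackelbergGame

variable {α β : Type*} (G : StackelbergGame α β)

/-- The follower's replies to `x` that satisfy the coupled constraint. -/
def feasible (x : α) : Set β := {y | y ∈ G.Y ∧ 0 ≤ G.g x y}

/-- The leader's value function `x ↦ max {f(x, y) : y ∈ Y, g(x, y) ≥ 0}`, as a real supremum; it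
is the junk value `0` when no reply is feasible or the objective is unbounded. -/
noncomputable def maxValue (x : α) : ℝ := sSup {w | ∃ y ∈ G.Y, 0 ≤ G.g x y ∧ w = G.f x y}

/-- The optimal value of the game for the leader, as a real infimum. -/
noncomputable def minMaxValue : ℝ := sInf {v | ∃ x ∈ G.X, v = G.maxValue x}

/-- `(x, y)` is a Stackelberg equilibrium: a feasible pair in which `y` is a best reply to `x` and
`x` is optimal for the leader. -/
def IsStackelbergEquilibrium (x : α) (y : β) : Prop :=
  x ∈ G.X ∧ y ∈ G.Y ∧ 0 ≤ G.g x y ∧ G.maxValue x ≤ G.f x y ∧ G.f x y ≤ G.minMaxValue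

/-- The Lagrangian of the follower's problem with multiplier `lam`. -/
def lagrangian (lam : ℝ) (x : α) (y : β) : ℝ := G.f x y + lam * G.g x y

/-- The maximum of the Lagrangian over the follower's unconstrained replies, as a real supremum. -/
noncomputable def lagrangianMaxValue (lam : ℝ) (x : α) : ℝ :=
  sSup {w | ∃ y ∈ G.Y, w = G.lagrangian lam x y}

/-- The optimal value of the Lagrangian relaxation, in which the leader also controls the
multiplier `lam ≥ 0`. -/
noncomputable def lagrangianMinMaxValue : ℝ :=
  sInf {v | ∃ lam : ℝ, 0 ≤ lam ∧ ∃ x ∈ G.X, v = G.lagrangianMaxValue lam x}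

variable {G} {x : α} {y : β} {lam : ℝ}

theorem maxValue_eq_of_isMaxOn (hy : y ∈ G.feasible x)
    (hmax : IsMaxOn (G.f x) (G.feasible x) y) : G.maxValue x = G.f x y := by
  refine IsGreatest.csSup_eq ⟨⟨y, hy.1, hy.2, rfl⟩, ?_⟩
  rintro _ ⟨z, hzY, hz, rfl⟩
  exact hmax ⟨hzY, hz⟩

theorem minMaxValue_eq_of_isMinOn (hx : x ∈ G.X) (hmin : IsMinOn G.maxValue G.X x) :
    G.minMaxValue = G.maxValue x := by
  refine IsLeast.csInf_eq ⟨⟨x, hx, rfl⟩, ?_⟩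
  rintro _ ⟨z, hz, rfl⟩
  exact hmin hz

theorem maxValue_le_lagrangianMaxValue (hlam : 0 ≤ lam) (hne : (G.feasible x).Nonempty)
    (hbdd : BddAbove {w | ∃ y ∈ G.Y, w = G.lagrangian lam x y}) :
    G.maxValue x ≤ G.lagrangianMaxValue lam x := by
  obtain ⟨y₀, hy₀Y, hy₀⟩ := hne
  refine csSup_le ⟨_, y₀, hy₀Y, hy₀, rfl⟩ ?_
  rintro _ ⟨y, hyY, hy, rfl⟩
  calc G.f x y ≤ G.lagrangian lam x y := le_add_of_nonneg_right (mul_nonneg hlam hy)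
    _ ≤ G.lagrangianMaxValue lam x := le_csSup hbdd ⟨y, hyY, rfl⟩

theorem lagrangianMinMaxValue_eq_minMaxValue (hlam : 0 ≤ lam) (hx : x ∈ G.X)
    (hmin : IsMinOn G.maxValue G.X x) (heq : G.lagrangianMaxValue lam x = G.maxValue x)
    (hweak : ∀ lam', 0 ≤ lam' → ∀ x' ∈ G.X, G.maxValue x' ≤ G.lagrangianMaxValue lam' x') :
    G.lagrangianMinMaxValue = G.minMaxValue := by
  rw [minMaxValue_eq_of_isMinOn hx hmin]
  refine IsLeast.csInf_eq ⟨⟨lam, hlam, x, hx, heq.symm⟩, ?_⟩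
  rintro _ ⟨lam', hlam', x', hx', rfl⟩
  exact (hmin hx').trans (hweak lam' hlam' x' hx')

end StackelbergGame

/-- The game of Example 3.1. -/
noncomputable def coupledGame : StackelbergGame ℝ ℝ where
  X := Set.Icc (-1) 1
  Y := Set.Icc (-1) 1
  f x y := x ^ 2 + y + 1
  g x y := 1 - (x + y)

namespace coupledGame

open StackelbergGame

variable {lam x y : ℝ}

theorem bestReply_mem_feasible (hx : x ≤ 2) : min 1 (1 - x) ∈ coupledGame.feasible x :=
  ⟨⟨le_min (by norm_num) (by linarith), min_le_left _ _⟩,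
    show 0 ≤ 1 - (x + min 1 (1 - x)) by linarith [min_le_right 1 (1 - x)]⟩

theorem maxValue_eq (hx : x ≤ 2) : coupledGame.maxValue x = x ^ 2 + min 1 (1 - x) + 1 := by
  refine maxValue_eq_of_isMaxOn (bestReply_mem_feasible hx) fun y ⟨hyY, hy⟩ ↦ ?_
  have hy_le : y ≤ min 1 (1 - x) := le_min hyY.2 (le_sub_iff_add_le'.mpr (sub_nonneg.mp hy))
  change x ^ 2 + y + 1 ≤ x ^ 2 + min 1 (1 - x) + 1
  gcongr

theorem maxValue_of_nonneg (hx₀ : 0 ≤ x) (hx : x ≤ 2) :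
    coupledGame.maxValue x = 7 / 4 + (x - 1 / 2) ^ 2 := by
  rw [maxValue_eq hx, min_eq_right (by linarith)]
  ring

theorem maxValue_half : coupledGame.maxValue (1 / 2) = 7 / 4 := by
  rw [maxValue_of_nonneg (by norm_num) (by norm_num)]
  norm_num

theorem two_le_maxValue_of_nonpos (hx : x ≤ 0) : 2 ≤ coupledGame.maxValue x := by
  rw [maxValue_eq (by linarith), min_eq_left (by linarith)]
  linarith [sq_nonneg x]

theorem seven_quarters_le_maxValue (hx : x ≤ 2) : 7 / 4 ≤ coupledGame.maxValue x := by
  rcases le_total 0 x with hx₀ | hx₀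
  · rw [maxValue_of_nonneg hx₀ hx]
    exact le_add_of_nonneg_right (sq_nonneg _)
  · linarith [two_le_maxValue_of_nonpos hx₀]

theorem eq_half_of_maxValue_le (hx : x ≤ 2) (hle : coupledGame.maxValue x ≤ 7 / 4) :
    x = 1 / 2 := by
  have hx₀ : 0 ≤ x := by
    by_contra! hneg
    linarith [two_le_maxValue_of_nonpos hneg.le]
  rw [maxValue_of_nonneg hx₀ hx, add_le_iff_nonpos_right, sq_nonpos_iff] at hle
  exact sub_eq_zero.mp hle

theorem half_mem_X : 1 / 2 ∈ coupledGame.X :=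
  ⟨by norm_num, by norm_num⟩

theorem isMinOn_maxValue_half : IsMinOn coupledGame.maxValue coupledGame.X (1 / 2) :=
  fun _ hx ↦ maxValue_half.trans_le (seven_quarters_le_maxValue (hx.2.trans one_le_two))

theorem minMaxValue_eq : coupledGame.minMaxValue = 7 / 4 :=
  (minMaxValue_eq_of_isMinOn half_mem_X isMinOn_maxValue_half).trans maxValue_half

theorem isStackelbergEquilibrium_iff :
    coupledGame.IsStackelbergEquilibrium x y ↔ x = 1 / 2 ∧ y = 1 / 2 := by
  constructor
  · rintro ⟨hxX, -, -, hmax, hmin⟩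
    rw [minMaxValue_eq] at hmin
    have hx : x = 1 / 2 := eq_half_of_maxValue_le (hxX.2.trans one_le_two) (hmax.trans hmin)
    subst hx
    have hf : coupledGame.f (1 / 2) y = 7 / 4 :=
      le_antisymm hmin (maxValue_half.symm.trans_le hmax)
    change (1 / 2) ^ 2 + y + 1 = (7 / 4 : ℝ) at hf
    exact ⟨rfl, by linarith⟩
  · rintro ⟨rfl, rfl⟩
    have hf : coupledGame.f (1 / 2) (1 / 2) = 7 / 4 := by norm_num [coupledGame]
    refine ⟨half_mem_X, half_mem_X, by norm_num [coupledGame], ?_, ?_⟩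
    · rw [hf, maxValue_half]
    · rw [hf, minMaxValue_eq]

theorem convexOn_lagrangian : ConvexOn ℝ Set.univ (coupledGame.lagrangian lam x) := by
  refine ⟨convex_univ, fun y _ z _ a b _ _ hab ↦ le_of_eq ?_⟩
  obtain rfl : b = 1 - a := by linarith
  simp only [lagrangian, coupledGame, smul_eq_mul]
  ring

theorem isGreatest_lagrangian :
    IsGreatest {w | ∃ y ∈ coupledGame.Y, w = coupledGame.lagrangian lam x y}
      (max (coupledGame.lagrangian lam x (-1)) (coupledGame.lagrangian lam x 1)) :=
  isGreatest_max_endpoints_of_convexOn (by norm_num)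
    (convexOn_lagrangian.subset (Set.subset_univ _) (convex_Icc _ _))

theorem lagrangianMaxValue_half :
    coupledGame.lagrangianMaxValue lam (1 / 2) = max (1 / 4 + 3 / 2 * lam) (9 / 4 - lam / 2) := by
  rw [lagrangianMaxValue, isGreatest_lagrangian.csSup_eq]
  simp only [lagrangian, coupledGame]
  ring_nf

theorem lagrangianMaxValue_half_le_iff :
    coupledGame.lagrangianMaxValue lam (1 / 2) ≤ 7 / 4 ↔ lam = 1 := by
  rw [lagrangianMaxValue_half, max_le_iff]
  constructor
  · rintro ⟨hle, hge⟩
    linarith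
  · rintro rfl
    norm_num

theorem maxValue_le_lagrangianMaxValue (hlam : 0 ≤ lam) (hx : x ≤ 2) :
    coupledGame.maxValue x ≤ coupledGame.lagrangianMaxValue lam x :=
  StackelbergGame.maxValue_le_lagrangianMaxValue hlam ⟨_, bestReply_mem_feasible hx⟩
    isGreatest_lagrangian.bddAbove

theorem lagrangianMinMaxValue_eq : coupledGame.lagrangianMinMaxValue = 7 / 4 := by
  have heq : coupledGame.lagrangianMaxValue 1 (1 / 2) = coupledGame.maxValue (1 / 2) := by
    rw [lagrangianMaxValue_half, maxValue_half]
    norm_num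
  rw [lagrangianMinMaxValue_eq_minMaxValue zero_le_one half_mem_X isMinOn_maxValue_half heq
    fun _ hlam _ hx ↦ maxValue_le_lagrangianMaxValue hlam (hx.2.trans one_le_two), minMaxValue_eq]

theorem lagrangianMaxValue_eq_lagrangianMinMaxValue_iff (hlam : 0 ≤ lam) (hx : x ≤ 2) :
    coupledGame.lagrangianMaxValue lam x = coupledGame.lagrangianMinMaxValue ↔
      lam = 1 ∧ x = 1 / 2 := by
  have hweak := maxValue_le_lagrangianMaxValue hlam hx
  rw [lagrangianMinMaxValue_eq]
  constructor
  · intro heq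
    obtain rfl := eq_half_of_maxValue_le hx (hweak.trans_eq heq)
    exact ⟨lagrangianMaxValue_half_le_iff.mp heq.le, rfl⟩
  · rintro ⟨rfl, rfl⟩
    exact le_antisymm (lagrangianMaxValue_half_le_iff.mpr rfl) (maxValue_half.symm.trans_le hweak)

end coupledGame

theorem g2daUpdate_zero : g2daUpdate (0, 0, 0) = (0, 0, 1) := by
  norm_num [g2daUpdate]

theorem isFixedPt_g2daUpdate : Function.IsFixedPt g2daUpdate (0, 0, 1) := by
  norm_num [Function.IsFixedPt, g2daUpdate]

/-- **Example 3.1: non-convergence of gradient descent descent ascent (G2DA).**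
`F(0,0,0) = (0,0,1)` and `F(0,0,1) = (0,0,1)`, so the iterates started at `(0,0,0)` equal
`(0,0,1)` for all `t ≥ 1`; the strategy pair `(x, y) = (0, 1)` is not a Stackelberg
equilibrium of `min_{x ∈ [-1,1]} max {x² + y + 1 : y ∈ [-1,1], 1 - (x + y) ≥ 0}`; and
the unique optimum of the game is `(λ*, x*, y*) = (1, 1/2, 1/2)`. -/
theorem example_3_1_g2da_non_convergence :
    g2daUpdate (0, 0, 0) = (0, 0, 1)
    ∧ g2daUpdate (0, 0, 1) = (0, 0, 1)
    ∧ (∀ t : ℕ, 1 ≤ t → g2daUpdate^[t] (0, 0, 0) = (0, 0, 1))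
    -- (x, y) = (0, 1) is not a Stackelberg equilibrium of the game:
    ∧ ¬ (sSup {w : ℝ | ∃ y ∈ Set.Icc (-1 : ℝ) 1, 0 ≤ 1 - ((0 : ℝ) + y)
              ∧ w = (0 : ℝ) ^ 2 + y + 1} ≤ (0 : ℝ) ^ 2 + 1 + 1
          ∧ (0 : ℝ) ^ 2 + 1 + 1 ≤ sInf {v : ℝ | ∃ x ∈ Set.Icc (-1 : ℝ) 1,
              v = sSup {w : ℝ | ∃ y ∈ Set.Icc (-1 : ℝ) 1, 0 ≤ 1 - (x + y)
                ∧ w = x ^ 2 + y + 1}})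
    -- (x*, y*) = (1/2, 1/2) is a Stackelberg equilibrium of the game, and it is unique:
    ∧ ((1 / 2 : ℝ) ∈ Set.Icc (-1 : ℝ) 1 ∧ (1 / 2 : ℝ) ∈ Set.Icc (-1 : ℝ) 1
        ∧ 0 ≤ 1 - ((1 / 2 : ℝ) + (1 / 2 : ℝ))
        ∧ sSup {w : ℝ | ∃ y ∈ Set.Icc (-1 : ℝ) 1, 0 ≤ 1 - ((1 / 2 : ℝ) + y)
            ∧ w = (1 / 2 : ℝ) ^ 2 + y + 1} ≤ (1 / 2 : ℝ) ^ 2 + 1 / 2 + 1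
        ∧ (1 / 2 : ℝ) ^ 2 + 1 / 2 + 1 ≤ sInf {v : ℝ | ∃ x ∈ Set.Icc (-1 : ℝ) 1,
            v = sSup {w : ℝ | ∃ y ∈ Set.Icc (-1 : ℝ) 1, 0 ≤ 1 - (x + y)
              ∧ w = x ^ 2 + y + 1}})
    ∧ (∀ xs ∈ Set.Icc (-1 : ℝ) 1, ∀ ys ∈ Set.Icc (-1 : ℝ) 1, 0 ≤ 1 - (xs + ys) →
        (sSup {w : ℝ | ∃ y ∈ Set.Icc (-1 : ℝ) 1, 0 ≤ 1 - (xs + y) ∧ w = xs ^ 2 + y + 1}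
            ≤ xs ^ 2 + ys + 1
          ∧ xs ^ 2 + ys + 1 ≤ sInf {v : ℝ | ∃ x ∈ Set.Icc (-1 : ℝ) 1,
              v = sSup {w : ℝ | ∃ y ∈ Set.Icc (-1 : ℝ) 1, 0 ≤ 1 - (x + y)
                ∧ w = x ^ 2 + y + 1}}) →
        xs = 1 / 2 ∧ ys = 1 / 2)
    -- λ* = 1 is the unique optimal multiplier, attained jointly with x* = 1/2:
    ∧ (sSup {w : ℝ | ∃ y ∈ Set.Icc (-1 : ℝ) 1,
          w = (1 / 2 : ℝ) ^ 2 + y + 1 + 1 * (1 - (1 / 2 + y))}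
        = sInf {v : ℝ | ∃ lam : ℝ, 0 ≤ lam ∧ ∃ x ∈ Set.Icc (-1 : ℝ) 1,
            v = sSup {w : ℝ | ∃ y ∈ Set.Icc (-1 : ℝ) 1,
              w = x ^ 2 + y + 1 + lam * (1 - (x + y))}})
    ∧ (∀ lam : ℝ, 0 ≤ lam → ∀ x ∈ Set.Icc (-1 : ℝ) 1,
        sSup {w : ℝ | ∃ y ∈ Set.Icc (-1 : ℝ) 1, w = x ^ 2 + y + 1 + lam * (1 - (x + y))}
          = sInf {v : ℝ | ∃ lam' : ℝ, 0 ≤ lam' ∧ ∃ x' ∈ Set.Icc (-1 : ℝ) 1,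
              v = sSup {w : ℝ | ∃ y ∈ Set.Icc (-1 : ℝ) 1,
                w = x' ^ 2 + y + 1 + lam' * (1 - (x' + y))}} →
        lam = 1 ∧ x = 1 / 2) := by
  have equilibrium_half : coupledGame.IsStackelbergEquilibrium (1 / 2) (1 / 2) :=
    coupledGame.isStackelbergEquilibrium_iff.mpr ⟨rfl, rfl⟩
  have not_equilibrium_zero_one : ¬ coupledGame.IsStackelbergEquilibrium 0 1 := fun h ↦ by
    norm_num [coupledGame.isStackelbergEquilibrium_iff] at h
  refine ⟨g2daUpdate_zero, isFixedPt_g2daUpdate, fun t ht ↦ ?_, fun h ↦ ?_, equilibrium_half,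
    fun xs hxs ys hys hfeas h ↦ ?_, ?_, fun lam hlam x hx h ↦ ?_⟩
  · exact iterate_eq_of_apply_eq_of_isFixedPt g2daUpdate_zero isFixedPt_g2daUpdate
      (Nat.one_le_iff_ne_zero.mp ht)
  · exact not_equilibrium_zero_one ⟨by norm_num [coupledGame], by norm_num [coupledGame],
      by norm_num [coupledGame], h⟩
  · exact coupledGame.isStackelbergEquilibrium_iff.mp ⟨hxs, hys, hfeas, h⟩
  · exact (coupledGame.lagrangianMaxValue_eq_lagrangianMinMaxValue_iff zero_le_one
      (by norm_num)).mpr ⟨rfl, rfl⟩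
  · exact (coupledGame.lagrangianMaxValue_eq_lagrangianMinMaxValue_iff hlam
      (hx.2.trans one_le_two)).mp h
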